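/- arXiv:0905.0928 — 2 statements merged into one kernel-verified Lean document; each statement's English description precedes it below -/
import Mathlib

section
/- Let m ≥ 1, q = m(m+3)/2 − 1, and let f : ℝ^m → ℝ^q be smooth. Assume: (i) at every point x ∈ ℝ^m the m + m(m+1)/2 vectors ∂_α f(x) (1 ≤ α ≤ m) and ∂_{αβ} f(x) (1 ≤ α ≤ β ≤ m) span ℝ^q; (ii) λ^α, λ^{αβ} = λ^{βα} : ℝ^m → ℝ are smooth functions, not all vanishing simultaneously at any point, with Σ_α λ^α ∂_α f + Σ_{α,β} λ^{αβ} ∂_{αβ} f = 0 identically. If smooth functions h_α and δg_{αβ} = δg_{βα} on ℝ^m satisfy the compatibility condition 2 Σ_α λ^α h_α + Σ_{α,β} λ^{αβ} (∂_α h_β + ∂_β h_α − δg_{αβ}) = 0 identically, then there exists a unique smooth map δf : ℝ^m → ℝ^q with ⟨∂_α f, δf⟩ = h_α and ⟨∂_{αβ} f, δf⟩ = (∂_α h_β + ∂_β h_α − δg_{αβ})/2 for all α, β; in particular δf satisfies ⟨∂_α f, ∂_β δf⟩ + ⟨∂_β f, ∂_α δf⟩ = δg_{αβ} for all α, β. 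-/
/-- The partial derivative of a map `f : ℝ^m → E` with respect to the `α`-th coordinate,
taken pointwise. -/
noncomputable def pd {m : ℕ} {E : Type*} [NormedAddCommGroup E] [NormedSpace ℝ E]
    (α : Fin m) (f : EuclideanSpace ℝ (Fin m) → E) :
    EuclideanSpace ℝ (Fin m) → E :=
  fun x => fderiv ℝ f x (EuclideanSpace.single α 1)

/-!
The system prescribes at each `x` the inner products of `δf x` with the first and second partial
derivatives of `f`. Equality of mixed partials leaves `m(m+3)/2 = q + 1` vectors spanning `ℝ^q`, so
their relations form a line, which is spanned by the given relation `λ`. Hence the compatibility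
condition is exactly Fredholm solvability of the system at `x`, and spanning gives uniqueness.
Regularity follows because the solution is the inverse of the frame operator `w ↦ Σ_i ⟨v_i, w⟩ v_i`
applied to `Σ_i b_i v_i`. The linearized equation is the second-order part of the system combined
with the derivative of its first-order part.
-/

section FiniteFamilies

variable {ι E : Type*} [NormedAddCommGroup E] [InnerProductSpace ℝ E]

lemma eq_of_forall_inner_eq_of_span_eq_top {v : ι → E}
    (hv : Submodule.span ℝ (Set.range v) = ⊤) {w w' : E}
    (h : ∀ i, inner ℝ (v i) w = inner ℝ (v i) w') : w = w' := by
  have hinner : (innerₗ E).flip w = (innerₗ E).flip w' :=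
    LinearMap.ext_on_range hv h
  exact ext_inner_left ℝ fun u => LinearMap.congr_fun hinner u

variable [Fintype ι]

lemma exists_smul_eq_of_sum_smul_eq_zero {K V : Type*} [Field K] [AddCommGroup V] [Module K V]
    {v : ι → V} (hv : Submodule.span K (Set.range v) = ⊤)
    (hcard : Module.finrank K V + 1 = Fintype.card ι) {c d : ι → K} (hc : c ≠ 0)
    (hcv : ∑ i, c i • v i = 0) (hdv : ∑ i, d i • v i = 0) : ∃ t : K, t • c = d := by
  let L : (ι → K) →ₗ[K] V := Fintype.linearCombination K v
  have hker : Module.finrank K (LinearMap.ker L) = 1 := by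
    have hrank := L.finrank_range_add_finrank_ker
    rw [Fintype.range_linearCombination, hv, finrank_top, Module.finrank_fintype_fun_eq_card]
      at hrank
    lia
  have hc' : (⟨c, hcv⟩ : LinearMap.ker L) ≠ 0 := fun h => hc (congrArg Subtype.val h)
  obtain ⟨t, ht⟩ := exists_smul_eq_of_finrank_eq_one hker hc' ⟨d, hdv⟩
  exact ⟨t, congrArg Subtype.val ht⟩

variable [FiniteDimensional ℝ E]

lemma exists_inner_eq_of_forall_relation (v : ι → E) (b : ι → ℝ)
    (h : ∀ c : ι → ℝ, ∑ i, c i • v i = 0 → ∑ i, c i * b i = 0) :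
    ∃ w : E, ∀ i, inner ℝ (v i) w = b i := by
  classical
  let L : (ι → ℝ) →ₗ[ℝ] E := Fintype.linearCombination ℝ v
  let φ : Module.Dual ℝ (ι → ℝ) := Fintype.linearCombination ℝ b
  obtain ⟨ψ, hψ⟩ : φ ∈ LinearMap.range L.dualMap := by
    rw [LinearMap.range_dualMap_eq_dualAnnihilator_ker, Submodule.mem_dualAnnihilator]
    exact h
  refine ⟨(InnerProductSpace.toDual ℝ E).symm ψ.toContinuousLinearMap, fun i => ?_⟩
  calc inner ℝ (v i) ((InnerProductSpace.toDual ℝ E).symm ψ.toContinuousLinearMap)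
      = ψ (v i) := by
        rw [real_inner_comm, InnerProductSpace.toDual_symm_apply]
        rfl
    _ = L.dualMap ψ (Pi.single i 1) := by simp [L]
    _ = b i := by simp [hψ, φ]

lemma exists_inner_eq_of_relation {v : ι → E} (hv : Submodule.span ℝ (Set.range v) = ⊤)
    (hcard : Module.finrank ℝ E + 1 = Fintype.card ι) {c : ι → ℝ} (hc : c ≠ 0)
    (hcv : ∑ i, c i • v i = 0) {b : ι → ℝ} (hcb : ∑ i, c i * b i = 0) :
    ∃ w : E, ∀ i, inner ℝ (v i) w = b i := by
  refine exists_inner_eq_of_forall_relation v b fun d hdv => ?_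
  obtain ⟨t, rfl⟩ := exists_smul_eq_of_sum_smul_eq_zero hv hcard hc hcv hdv
  simp only [Pi.smul_apply, smul_eq_mul, mul_assoc, ← Finset.mul_sum, hcb, mul_zero]

end FiniteFamilies

section FrameOperator

variable {ι E : Type*} [Fintype ι] [NormedAddCommGroup E] [InnerProductSpace ℝ E]

/-- The frame operator `w ↦ ∑ i, ⟪v i, w⟫ • v i` of a finite family `v`. It recovers a vector from
its inner products with a spanning family by an expression depending smoothly on `v`. -/
noncomputable def frameOperator (v : ι → E) : E →L[ℝ] E :=
  ∑ i, (innerSL ℝ (v i)).smulRight (v i)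

lemma frameOperator_apply (v : ι → E) (w : E) :
    frameOperator v w = ∑ i, inner ℝ (v i) w • v i := by
  simp [frameOperator]

lemma inner_frameOperator_self (v : ι → E) (w : E) :
    inner ℝ (frameOperator v w) w = ∑ i, inner ℝ (v i) w * inner ℝ (v i) w := by
  simp only [frameOperator_apply, sum_inner, real_inner_smul_left]

lemma frameOperator_injective {v : ι → E} (hv : Submodule.span ℝ (Set.range v) = ⊤) :
    Function.Injective (frameOperator v) := by
  rw [injective_iff_map_eq_zero]
  intro w hw
  have hsum : ∑ i, inner ℝ (v i) w * inner ℝ (v i) w = 0 := by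
    rw [← inner_frameOperator_self, hw, inner_zero_left]
  have hzero := (Finset.sum_eq_zero_iff_of_nonneg fun i _ => mul_self_nonneg _).1 hsum
  refine eq_of_forall_inner_eq_of_span_eq_top hv fun i => ?_
  rw [inner_zero_right]
  exact mul_self_eq_zero.1 (hzero i (Finset.mem_univ i))

lemma contDiff_frameOperator {X : Type*} [NormedAddCommGroup X] [NormedSpace ℝ X]
    {n : WithTop ℕ∞} {v : ι → X → E} (hv : ∀ i, ContDiff ℝ n (v i)) :
    ContDiff ℝ n fun x => frameOperator fun i => v i x :=
  ContDiff.sum fun i _ => ((innerSL ℝ (E := E)).contDiff.comp (hv i)).smulRight (hv i)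

variable [FiniteDimensional ℝ E]

lemma isUnit_frameOperator {v : ι → E} (hv : Submodule.span ℝ (Set.range v) = ⊤) :
    IsUnit (frameOperator v) := by
  have : CompleteSpace E := FiniteDimensional.complete ℝ E
  have hinj := frameOperator_injective hv
  exact ContinuousLinearMap.isUnit_iff_bijective.2
    ⟨hinj, LinearMap.injective_iff_surjective (f := (frameOperator v : E →ₗ[ℝ] E)).1 hinj⟩

end FrameOperator

lemma contDiff_of_forall_inner_eq {ι X E : Type*} [Finite ι]
    [NormedAddCommGroup X] [NormedSpace ℝ X]
    [NormedAddCommGroup E] [InnerProductSpace ℝ E] [FiniteDimensional ℝ E]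
    {n : WithTop ℕ∞} {v : ι → X → E} (hv : ∀ i, ContDiff ℝ n (v i))
    (hspan : ∀ x, Submodule.span ℝ (Set.range fun i => v i x) = ⊤)
    {b : ι → X → ℝ} (hb : ∀ i, ContDiff ℝ n (b i)) {w : X → E}
    (hw : ∀ x i, inner ℝ (v i x) (w x) = b i x) : ContDiff ℝ n w := by
  cases nonempty_fintype ι
  have : CompleteSpace E := FiniteDimensional.complete ℝ E
  let T : X → E →L[ℝ] E := fun x => frameOperator fun i => v i x
  have hT (x : X) : IsUnit (T x) := isUnit_frameOperator (hspan x)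
  have hTw (x : X) : T x (w x) = ∑ i, b i x • v i x := by
    simp only [T, frameOperator_apply, hw]
  have hw_eq : w = fun x => Ring.inverse (T x) (∑ i, b i x • v i x) := by
    funext x
    rw [← hTw, ← mul_apply_eq_comp, Ring.inverse_mul_cancel _ (hT x),
      one_apply_eq_self]
  have hTinv : ContDiff ℝ n fun x => Ring.inverse (T x) := by
    refine contDiff_iff_contDiffAt.2 fun x => ?_
    obtain ⟨u, hu⟩ := hT x
    exact (hu ▸ contDiffAt_ringInverse ℝ u).comp x (contDiff_frameOperator hv).contDiffAt
  rw [hw_eq]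
  exact hTinv.clm_apply (ContDiff.sum fun i _ => (hb i).smul (hv i))

section SymmetricFamilies

open scoped Finset

variable {ι : Type*} [Fintype ι]

lemma card_sum_sym2 : Fintype.card (ι ⊕ Sym2 ι) = Fintype.card ι * (Fintype.card ι + 3) / 2 := by
  have hsplit : ∀ k : ℕ, k * (k + 3) = (k + 1) * k + 2 * k := fun k => by ring
  rw [Fintype.card_sum, Sym2.card, Nat.choose_two_right, Nat.add_sub_cancel, hsplit,
    Nat.add_mul_div_left _ _ two_pos, add_comm]

lemma sum_sum_sym2_mk [DecidableEq ι] {M : Type*} [AddCommMonoid M] (F : Sym2 ι → M) :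
    ∑ i, ∑ j, F s(i, j) = ∑ s, #{p : ι × ι | s(p.1, p.2) = s} • F s := by
  simp_rw [← Fintype.sum_prod_type' fun i j => F s(i, j), ← Finset.sum_const]
  exact (Finset.sum_fiberwise' _ _ _).symm

lemma card_sym2_mk_fiber_ne_zero [DecidableEq ι] (s : Sym2 ι) :
    #{p : ι × ι | s(p.1, p.2) = s} ≠ 0 := by
  induction s with
  | h i j => exact Finset.card_ne_zero_of_mem (a := (i, j)) (by simp)

variable {E : Type*} [NormedAddCommGroup E] [InnerProductSpace ℝ E] [FiniteDimensional ℝ E]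

lemma exists_inner_eq_of_sym2_relation {v : ι → E} {V : Sym2 ι → E}
    (hspan : Submodule.span ℝ (Set.range v ∪ Set.range V) = ⊤)
    (hrank : Module.finrank ℝ E + 1 = Fintype.card ι * (Fintype.card ι + 3) / 2)
    {a : ι → ℝ} {A : Sym2 ι → ℝ} (hne : a ≠ 0 ∨ A ≠ 0)
    (hrel : ∑ i, a i • v i + ∑ i, ∑ j, A s(i, j) • V s(i, j) = 0)
    {b : ι → ℝ} {B : Sym2 ι → ℝ}
    (hcomp : ∑ i, a i * b i + ∑ i, ∑ j, A s(i, j) * B s(i, j) = 0) :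
    ∃ w : E, (∀ i, inner ℝ (v i) w = b i) ∧ ∀ s, inner ℝ (V s) w = B s := by
  classical
  let mult (s : Sym2 ι) : ℕ := #{p : ι × ι | s(p.1, p.2) = s}
  have hspan' : Submodule.span ℝ (Set.range (Sum.elim v V)) = ⊤ := by
    rwa [Set.Sum.elim_range]
  have hc : Sum.elim a (fun s => mult s • A s) ≠ 0 := by
    intro hzero
    have ha : a = 0 := funext fun i => congrFun hzero (Sum.inl i)
    have hA : A = 0 := funext fun s =>
      (smul_eq_zero_iff_right (card_sym2_mk_fiber_ne_zero s)).1 (congrFun hzero (Sum.inr s))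
    exact hne.elim (· ha) (· hA)
  obtain ⟨w, hw⟩ := exists_inner_eq_of_relation (b := Sum.elim b B) hspan'
    (hrank.trans card_sum_sym2.symm) hc
    (by
      rw [sum_sum_sym2_mk fun s => A s • V s] at hrel
      simpa only [Fintype.sum_sum_type, Sum.elim_inl, Sum.elim_inr, smul_assoc] using hrel)
    (by
      rw [sum_sum_sym2_mk fun s => A s * B s] at hcomp
      simpa only [Fintype.sum_sum_type, Sum.elim_inl, Sum.elim_inr, smul_mul_assoc] using hcomp)
  exact ⟨w, fun i => hw (Sum.inl i), fun s => hw (Sum.inr s)⟩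

lemma exists_inner_eq_of_symm_relation {v : ι → E} {V : ι → ι → E}
    (hV : ∀ i j, V i j = V j i)
    (hspan : Submodule.span ℝ (Set.range (Sum.elim v fun p : ι × ι => V p.1 p.2)) = ⊤)
    (hrank : Module.finrank ℝ E + 1 = Fintype.card ι * (Fintype.card ι + 3) / 2)
    {a : ι → ℝ} {A : ι → ι → ℝ} (hA : ∀ i j, A i j = A j i) (hne : a ≠ 0 ∨ A ≠ 0)
    (hrel : ∑ i, a i • v i + ∑ i, ∑ j, A i j • V i j = 0)
    {b : ι → ℝ} {B : ι → ι → ℝ} (hB : ∀ i j, B i j = B j i)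
    (hcomp : ∑ i, a i * b i + ∑ i, ∑ j, A i j * B i j = 0) :
    ∃ w : E, (∀ i, inner ℝ (v i) w = b i) ∧ ∀ i j, inner ℝ (V i j) w = B i j := by
  have hspan' : Submodule.span ℝ (Set.range v ∪ Set.range (Sym2.lift ⟨V, hV⟩)) = ⊤ := by
    rw [Set.Sum.elim_range] at hspan
    refine top_unique (hspan ▸ Submodule.span_mono (Set.union_subset_union_right _ ?_))
    rintro _ ⟨⟨i, j⟩, rfl⟩
    exact ⟨s(i, j), rfl⟩
  have hne' : a ≠ 0 ∨ Sym2.lift ⟨A, hA⟩ ≠ 0 :=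
    hne.imp_right fun hA0 hlift => hA0 (funext₂ fun i j => congrFun hlift s(i, j))
  obtain ⟨w, hv, hVw⟩ := exists_inner_eq_of_sym2_relation hspan' hrank hne' hrel
    (B := Sym2.lift ⟨B, hB⟩) hcomp
  exact ⟨w, hv, fun i j => hVw s(i, j)⟩

end SymmetricFamilies

section PartialDerivatives

variable {m : ℕ} {E : Type*} [NormedAddCommGroup E]

lemma contDiff_pd [NormedSpace ℝ E] {n : WithTop ℕ∞} {f : EuclideanSpace ℝ (Fin m) → E}
    (hf : ContDiff ℝ (n + 1) f) (α : Fin m) : ContDiff ℝ n (pd α f) :=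
  (hf.fderiv_right le_rfl).clm_apply contDiff_const

lemma pd_pd_eq_fderiv_fderiv [NormedSpace ℝ E] {f : EuclideanSpace ℝ (Fin m) → E}
    {x : EuclideanSpace ℝ (Fin m)} (hf : DifferentiableAt ℝ (fderiv ℝ f) x) (α β : Fin m) :
    pd α (pd β f) x =
      fderiv ℝ (fderiv ℝ f) x (EuclideanSpace.single α 1) (EuclideanSpace.single β 1) := by
  unfold pd
  rw [fderiv_clm_apply hf (differentiableAt_const _)]
  simp

lemma pd_comm [NormedSpace ℝ E] {f : EuclideanSpace ℝ (Fin m) → E} (hf : ContDiff ℝ 2 f)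
    (α β : Fin m) (x : EuclideanSpace ℝ (Fin m)) : pd α (pd β f) x = pd β (pd α f) x := by
  have hdiff : DifferentiableAt ℝ (fderiv ℝ f) x :=
    (hf.fderiv_right (m := 1) one_add_one_eq_two.le).differentiable one_ne_zero x
  have hsymm : IsSymmSndFDerivAt ℝ f x := hf.contDiffAt.isSymmSndFDerivAt (by simp)
  rw [pd_pd_eq_fderiv_fderiv hdiff, pd_pd_eq_fderiv_fderiv hdiff, hsymm.eq]

lemma pd_inner [InnerProductSpace ℝ E] {u v : EuclideanSpace ℝ (Fin m) → E}
    {x : EuclideanSpace ℝ (Fin m)} (hu : DifferentiableAt ℝ u x) (hv : DifferentiableAt ℝ v x)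
    (α : Fin m) :
    pd α (fun y => inner ℝ (u y) (v y)) x = inner ℝ (u x) (pd α v x) + inner ℝ (pd α u x) (v x) :=
  fderiv_inner_apply ℝ hu hv _

end PartialDerivatives

section NashSystem

variable {m : ℕ} {E : Type*} [NormedAddCommGroup E] [InnerProductSpace ℝ E]
  {f δf : EuclideanSpace ℝ (Fin m) → E} {h : Fin m → EuclideanSpace ℝ (Fin m) → ℝ}
  {δg : Fin m → Fin m → EuclideanSpace ℝ (Fin m) → ℝ} {n : WithTop ℕ∞}

/-- The first and second partial derivatives of `f`, which span its second osculating space. Both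
orders of each mixed derivative are listed. -/
noncomputable def osculatingFamily (f : EuclideanSpace ℝ (Fin m) → E) :
    Fin m ⊕ Fin m × Fin m → EuclideanSpace ℝ (Fin m) → E :=
  Sum.elim (fun α => pd α f) fun p => pd p.1 (pd p.2 f)

/-- The inner products that Nash's algebraic system prescribes between a variation and the members
of the `osculatingFamily`. -/
noncomputable def nashData (h : Fin m → EuclideanSpace ℝ (Fin m) → ℝ)
    (δg : Fin m → Fin m → EuclideanSpace ℝ (Fin m) → ℝ) :
    Fin m ⊕ Fin m × Fin m → EuclideanSpace ℝ (Fin m) → ℝ :=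
  Sum.elim h fun p x => (pd p.1 (h p.2) x + pd p.2 (h p.1) x - δg p.1 p.2 x) / 2

/-- Nash's algebraic system for a variation `δf` of `f`: the tangential components `h` are
prescribed, and so are the components along the second derivatives that the linearized
isometric-immersion equation with right-hand side `δg` then forces. -/
def SolvesNashSystem (f : EuclideanSpace ℝ (Fin m) → E)
    (h : Fin m → EuclideanSpace ℝ (Fin m) → ℝ)
    (δg : Fin m → Fin m → EuclideanSpace ℝ (Fin m) → ℝ)
    (δf : EuclideanSpace ℝ (Fin m) → E) : Prop :=
  (∀ α : Fin m, ∀ x, inner ℝ (pd α f x) (δf x) = h α x) ∧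
    ∀ α β : Fin m, ∀ x,
      inner ℝ (pd α (pd β f) x) (δf x) = (pd α (h β) x + pd β (h α) x - δg α β x) / 2

lemma solvesNashSystem_iff_forall_inner_osculatingFamily :
    SolvesNashSystem f h δg δf ↔
      ∀ x i, inner ℝ (osculatingFamily f i x) (δf x) = nashData h δg i x := by
  refine ⟨fun hδf x i => ?_, fun hδf =>
    ⟨fun α x => hδf x (Sum.inl α), fun α β x => hδf x (Sum.inr (α, β))⟩⟩
  rcases i with α | ⟨α, β⟩
  · exact hδf.1 α x
  · exact hδf.2 α β x

lemma contDiff_osculatingFamily (hf : ContDiff ℝ (n + 2) f) (i : Fin m ⊕ Fin m × Fin m) :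
    ContDiff ℝ n (osculatingFamily f i) := by
  have hf' : ContDiff ℝ (n + 1 + 1) f := by rwa [add_assoc, one_add_one_eq_two]
  rcases i with α | ⟨α, β⟩
  · exact (contDiff_pd hf' α).of_le le_self_add
  · exact contDiff_pd (contDiff_pd hf' β) α

lemma contDiff_nashData (hh : ∀ α, ContDiff ℝ (n + 1) (h α))
    (hδg : ∀ α β, ContDiff ℝ n (δg α β)) (i : Fin m ⊕ Fin m × Fin m) :
    ContDiff ℝ n (nashData h δg i) := by
  rcases i with α | ⟨α, β⟩
  · exact (hh α).of_le le_self_add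
  · exact (((contDiff_pd (hh β) α).add (contDiff_pd (hh α) β)).sub (hδg α β)).div_const 2

lemma span_osculatingFamily_eq_top {x : EuclideanSpace ℝ (Fin m)}
    (hspan : Submodule.span ℝ
      ({v | ∃ α : Fin m, v = pd α f x} ∪
        {v | ∃ α β : Fin m, α ≤ β ∧ v = pd α (pd β f) x}) = ⊤) :
    Submodule.span ℝ (Set.range fun i => osculatingFamily f i x) = ⊤ := by
  refine top_unique (hspan ▸ Submodule.span_mono ?_)
  rintro _ (⟨α, rfl⟩ | ⟨α, β, -, rfl⟩)
  · exact ⟨Sum.inl α, rfl⟩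
  · exact ⟨Sum.inr (α, β), rfl⟩

namespace SolvesNashSystem

lemma unique {δf' : EuclideanSpace ℝ (Fin m) → E}
    (hspan : ∀ x, Submodule.span ℝ (Set.range fun i => osculatingFamily f i x) = ⊤)
    (hδf : SolvesNashSystem f h δg δf) (hδf' : SolvesNashSystem f h δg δf') : δf = δf' := by
  rw [solvesNashSystem_iff_forall_inner_osculatingFamily] at hδf hδf'
  exact funext fun x => eq_of_forall_inner_eq_of_span_eq_top (hspan x) fun i =>
    (hδf x i).trans (hδf' x i).symm

lemma contDiff [FiniteDimensional ℝ E] (hδf : SolvesNashSystem f h δg δf)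
    (hspan : ∀ x, Submodule.span ℝ (Set.range fun i => osculatingFamily f i x) = ⊤)
    (hf : ContDiff ℝ (n + 2) f) (hh : ∀ α, ContDiff ℝ (n + 1) (h α))
    (hδg : ∀ α β, ContDiff ℝ n (δg α β)) : ContDiff ℝ n δf :=
  contDiff_of_forall_inner_eq (contDiff_osculatingFamily hf) hspan (contDiff_nashData hh hδg)
    (solvesNashSystem_iff_forall_inner_osculatingFamily.1 hδf)

lemma pd_tangential_eq (hδf : SolvesNashSystem f h δg δf) (hf : ContDiff ℝ 2 f)
    (hdiff : Differentiable ℝ δf) (α β : Fin m) (x : EuclideanSpace ℝ (Fin m)) :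
    pd β (h α) x =
      inner ℝ (pd α f x) (pd β δf x) + inner ℝ (pd β (pd α f) x) (δf x) := by
  have hα : h α = fun y => inner ℝ (pd α f y) (δf y) := funext fun y => (hδf.1 α y).symm
  have hpd : Differentiable ℝ (pd α f) :=
    (contDiff_pd (n := 1) (by rwa [one_add_one_eq_two]) α).differentiable one_ne_zero
  rw [hα, pd_inner (hpd x) (hdiff x)]

lemma linearized_isometric_immersion (hδf : SolvesNashSystem f h δg δf) (hf : ContDiff ℝ 2 f)
    (hdiff : Differentiable ℝ δf) (hsymm : ∀ α β, δg α β = δg β α) (α β : Fin m)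
    (x : EuclideanSpace ℝ (Fin m)) :
    inner ℝ (pd α f x) (pd β δf x) + inner ℝ (pd β f x) (pd α δf x) = δg α β x := by
  have hαβ := hδf.pd_tangential_eq hf hdiff α β x
  have hβα := hδf.pd_tangential_eq hf hdiff β α x
  rw [hδf.2] at hαβ hβα
  rw [hsymm β α] at hαβ
  linarith

end SolvesNashSystem

variable [FiniteDimensional ℝ E] {lam1 : Fin m → EuclideanSpace ℝ (Fin m) → ℝ}
  {lam2 : Fin m → Fin m → EuclideanSpace ℝ (Fin m) → ℝ}

lemma exists_solvesNashSystem (hrank : Module.finrank ℝ E + 1 = m * (m + 3) / 2)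
    (hf : ContDiff ℝ 2 f)
    (hspan : ∀ x, Submodule.span ℝ (Set.range fun i => osculatingFamily f i x) = ⊤)
    (hlam2sym : ∀ α β, lam2 α β = lam2 β α)
    (hlamne : ∀ x, (∃ α, lam1 α x ≠ 0) ∨ ∃ α β, lam2 α β x ≠ 0)
    (hrel : ∀ x,
      ∑ α, lam1 α x • pd α f x + ∑ α, ∑ β, lam2 α β x • pd α (pd β f) x = 0)
    (hδgsym : ∀ α β, δg α β = δg β α)
    (hcomp : ∀ x, 2 * ∑ α, lam1 α x * h α x +
      ∑ α, ∑ β, lam2 α β x * (pd α (h β) x + pd β (h α) x - δg α β x) = 0) :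
    ∃ δf, SolvesNashSystem f h δg δf := by
  have hpointwise (x : EuclideanSpace ℝ (Fin m)) : ∃ w : E,
      (∀ α, inner ℝ (pd α f x) w = h α x) ∧ ∀ α β,
        inner ℝ (pd α (pd β f) x) w = (pd α (h β) x + pd β (h α) x - δg α β x) / 2 := by
    have hspan_x : Submodule.span ℝ (Set.range (Sum.elim (fun α => pd α f x)
        fun p : Fin m × Fin m => pd p.1 (pd p.2 f) x)) = ⊤ := by
      convert hspan x with i
      cases i <;> rfl
    have hne : (fun α => lam1 α x) ≠ 0 ∨ (fun α β => lam2 α β x) ≠ 0 := by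
      simpa only [Function.ne_iff, Pi.zero_apply] using hlamne x
    have hcomp_half : ∑ α, lam1 α x * h α x + ∑ α, ∑ β,
        lam2 α β x * ((pd α (h β) x + pd β (h α) x - δg α β x) / 2) = 0 := by
      simp only [← mul_div_assoc, ← Finset.sum_div]
      linarith [hcomp x]
    exact exists_inner_eq_of_symm_relation (fun α β => pd_comm hf α β x) hspan_x
      (by rwa [Fintype.card_fin]) (fun α β => congrFun (hlam2sym α β) x) hne (hrel x)
      (fun α β => by rw [hδgsym α β, add_comm (pd α (h β) x)]) hcomp_half
  choose δf hδf using hpointwise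
  exact ⟨δf, fun α x => (hδf x).1 α, fun α β x => (hδf x).2 α β⟩

theorem exists_unique_solution_general (hrank : Module.finrank ℝ E + 1 = m * (m + 3) / 2)
    (hf : ContDiff ℝ (n + 2) f)
    (hspan : ∀ x, Submodule.span ℝ
      ({v | ∃ α : Fin m, v = pd α f x} ∪
        {v | ∃ α β : Fin m, α ≤ β ∧ v = pd α (pd β f) x}) = ⊤)
    (hlam2sym : ∀ α β, lam2 α β = lam2 β α)
    (hlamne : ∀ x, (∃ α, lam1 α x ≠ 0) ∨ ∃ α β, lam2 α β x ≠ 0)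
    (hrel : ∀ x,
      ∑ α, lam1 α x • pd α f x + ∑ α, ∑ β, lam2 α β x • pd α (pd β f) x = 0)
    (hh : ∀ α, ContDiff ℝ (n + 1) (h α)) (hδg : ∀ α β, ContDiff ℝ n (δg α β))
    (hδgsym : ∀ α β, δg α β = δg β α)
    (hcomp : ∀ x, 2 * ∑ α, lam1 α x * h α x +
      ∑ α, ∑ β, lam2 α β x * (pd α (h β) x + pd β (h α) x - δg α β x) = 0) :
    (∃! δf, ContDiff ℝ n δf ∧ SolvesNashSystem f h δg δf) ∧
      ∀ δf, Differentiable ℝ δf → SolvesNashSystem f h δg δf → ∀ α β x,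
        inner ℝ (pd α f x) (pd β δf x) + inner ℝ (pd β f x) (pd α δf x) = δg α β x := by
  have hspan' x := span_osculatingFamily_eq_top (hspan x)
  have hf2 : ContDiff ℝ 2 f := hf.of_le le_add_self
  obtain ⟨δf, hδf⟩ := exists_solvesNashSystem hrank hf2 hspan' hlam2sym hlamne hrel hδgsym hcomp
  exact ⟨⟨δf, ⟨hδf.contDiff hspan' hf hh hδg, hδf⟩, fun _ hδf' => hδf'.2.unique hspan' hδf⟩,
    fun _ hdiff hsol => hsol.linearized_isometric_immersion hf2 hdiff hδgsym⟩

end NashSystem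

/-- For `q = m(m+3)/2 − 1`, if the first and second partial derivatives of the smooth map
`f : ℝ^m → ℝ^q` span `ℝ^q` at every point, and `λ^α, λ^{αβ}` are smooth functions, never all
vanishing simultaneously, with `Σ_α λ^α ∂_α f + Σ_{α,β} λ^{αβ} ∂_{αβ} f = 0`, then whenever
smooth functions `h_α, δg_{αβ}` satisfy the compatibility condition
`2 Σ_α λ^α h_α + Σ_{α,β} λ^{αβ} (∂_α h_β + ∂_β h_α − δg_{αβ}) = 0`, there exists a unique
smooth `δf : ℝ^m → ℝ^q` with `⟨∂_α f, δf⟩ = h_α` and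
`⟨∂_{αβ} f, δf⟩ = (∂_α h_β + ∂_β h_α − δg_{αβ})/2`; in particular this `δf` solves the
linearized isometric-immersion equation. -/
theorem exists_unique_solution {m q : ℕ} (hm : 1 ≤ m) (hq : q = m * (m + 3) / 2 - 1)
    (f : EuclideanSpace ℝ (Fin m) → EuclideanSpace ℝ (Fin q))
    (hf : ContDiff ℝ (⊤ : ℕ∞) f)
    (hspan : ∀ x : EuclideanSpace ℝ (Fin m),
        Submodule.span ℝ
          ({v | ∃ α : Fin m, v = pd α f x}
            ∪ {v | ∃ α β : Fin m, α ≤ β ∧ v = pd α (pd β f) x}) = ⊤)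
    (lam1 : Fin m → EuclideanSpace ℝ (Fin m) → ℝ)
    (lam2 : Fin m → Fin m → EuclideanSpace ℝ (Fin m) → ℝ)
    (hlam1 : ∀ α, ContDiff ℝ (⊤ : ℕ∞) (lam1 α))
    (hlam2 : ∀ α β, ContDiff ℝ (⊤ : ℕ∞) (lam2 α β))
    (hlam2sym : ∀ α β, lam2 α β = lam2 β α)
    (hlamne : ∀ x : EuclideanSpace ℝ (Fin m),
        (∃ α, lam1 α x ≠ 0) ∨ (∃ α β, lam2 α β x ≠ 0))
    (hrel : ∀ x : EuclideanSpace ℝ (Fin m),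
        ∑ α, lam1 α x • pd α f x + ∑ α, ∑ β, lam2 α β x • pd α (pd β f) x = 0)
    (h : Fin m → EuclideanSpace ℝ (Fin m) → ℝ)
    (hh : ∀ α, ContDiff ℝ (⊤ : ℕ∞) (h α))
    (δg : Fin m → Fin m → EuclideanSpace ℝ (Fin m) → ℝ)
    (hδg : ∀ α β, ContDiff ℝ (⊤ : ℕ∞) (δg α β))
    (hδgsym : ∀ α β, δg α β = δg β α)
    (hcomp : ∀ x : EuclideanSpace ℝ (Fin m),
        2 * ∑ α, lam1 α x * h α x
          + ∑ α, ∑ β, lam2 α β x * (pd α (h β) x + pd β (h α) x - δg α β x) = 0) :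
    (∃! δf : EuclideanSpace ℝ (Fin m) → EuclideanSpace ℝ (Fin q),
        ContDiff ℝ (⊤ : ℕ∞) δf
        ∧ (∀ α : Fin m, ∀ x, (inner ℝ (pd α f x) (δf x) : ℝ) = h α x)
        ∧ (∀ α β : Fin m, ∀ x,
            (inner ℝ (pd α (pd β f) x) (δf x) : ℝ)
              = (pd α (h β) x + pd β (h α) x - δg α β x) / 2))
    ∧ (∀ δf : EuclideanSpace ℝ (Fin m) → EuclideanSpace ℝ (Fin q),
        (ContDiff ℝ (⊤ : ℕ∞) δf
          ∧ (∀ α : Fin m, ∀ x, (inner ℝ (pd α f x) (δf x) : ℝ) = h α x)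
          ∧ (∀ α β : Fin m, ∀ x,
              (inner ℝ (pd α (pd β f) x) (δf x) : ℝ)
                = (pd α (h β) x + pd β (h α) x - δg α β x) / 2)) →
        ∀ α β : Fin m, ∀ x,
          (inner ℝ (pd α f x) (pd β δf x) : ℝ) + (inner ℝ (pd β f x) (pd α δf x) : ℝ)
            = δg α β x) := by
  have hrank : Module.finrank ℝ (EuclideanSpace ℝ (Fin q)) + 1 = m * (m + 3) / 2 := by
    rw [finrank_euclideanSpace_fin, hq,
      Nat.sub_add_cancel ((Nat.le_div_iff_mul_le two_pos).2 (by nlinarith))]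
  have hgeneral := exists_unique_solution_general hrank hf hspan hlam2sym hlamne hrel hh hδg
    hδgsym hcomp
  exact ⟨hgeneral.1, fun δf hδf => hgeneral.2 δf (hδf.1.differentiable (by simp)) hδf.2⟩
end

section
/- Let m ≥ 2, let F : ℝ^m → ℝ^{m(m+3)/2} be the canonical free map F(x^1,…,x^m) = (x^1,…,x^m, all quadratic monomials x^α x^β with α ≤ β), and let π : ℝ^{m(m+3)/2} → ℝ^{m(m+3)/2 − 1} be the projection forgetting the coordinate corresponding to the monomial x^1 x^2. Then the composition F_π = π ∘ F satisfies: (i) ∂_{12} F_π ≡ 0 on ℝ^m; (ii) at every point x ∈ ℝ^m the remaining m(m+3)/2 − 1 vectors ∂_α F_π(x) (1 ≤ α ≤ m) and ∂_{αβ} F_π(x) (1 ≤ α ≤ β ≤ m, (α,β) ≠ (1,2)) are linearly independent in ℝ^{m(m+3)/2 − 1}; in particular they span ℝ^{m(m+3)/2 − 1} and F_π is an immersion. -/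
/-!
The linear coordinates of the map `x ↦ (x_α, x_a x_b)` have constant first derivatives, and a
quadratic coordinate `x_a x_b` has second derivative
`∂_{αβ} (x_a x_b) = δ_{aα} δ_{bβ} + δ_{aβ} δ_{bα}`, which vanishes unless `{a, b} = {α, β}`.
Hence the second derivatives at the retained pairs are nonzero multiples of distinct standard basis
vectors, all killed by the projection onto the linear coordinates, while that projection sends the
first derivatives to the standard basis. Independence of the whole family follows.
-/

theorem fderiv_piLp_apply {𝕜 E ι : Type*} [NontriviallyNormedField 𝕜] [NormedAddCommGroup E]
    [NormedSpace 𝕜 E] [Finite ι] {G : ι → Type*} [∀ i, NormedAddCommGroup (G i)]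
    [∀ i, NormedSpace 𝕜 (G i)] {p : ENNReal} [Fact (1 ≤ p)] {f : E → PiLp p G} {x : E}
    (hf : DifferentiableAt 𝕜 f x) (v : E) (i : ι) :
    fderiv 𝕜 f x v i = fderiv 𝕜 (fun y => f y i) x v := by
  have := Fintype.ofFinite ι
  have hproj : HasFDerivAt (𝕜 := 𝕜) (fun z : PiLp p G => z i) (PiLp.proj p G i) (f x) :=
    PiLp.hasFDerivAt_apply p (f x) i
  exact congr($((hproj.comp x hf.hasFDerivAt).fderiv.symm) v)

theorem linearIndependent_sumElim_of_map {R M N ι κ : Type*} [Ring R] [AddCommGroup M] [Module R M]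
    [AddCommGroup N] [Module R N] (L : M →ₗ[R] N) {v : ι → M} {w : κ → M}
    (hv : LinearIndependent R (L ∘ v)) (hw : LinearIndependent R w) (hLw : ∀ k, L (w k) = 0) :
    LinearIndependent R (Sum.elim v w) := by
  have hspan : Submodule.span R (Set.range w) ≤ LinearMap.ker L :=
    Submodule.span_le.2 (Set.range_subset_iff.2 hLw)
  exact hv.of_comp.sum_type hw ((Submodule.range_ker_disjoint hv).mono_right hspan)

theorem injective_sym2Mk_of_le {α κ : Type*} [PartialOrder α] {e : κ → α × α} (he : e.Injective)
    (hle : ∀ k, (e k).1 ≤ (e k).2) : Function.Injective fun k => s((e k).1, (e k).2) := by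
  intro k l hkl
  apply he
  rcases Sym2.eq_iff.1 hkl with ⟨hfst, hsnd⟩ | ⟨hfst, hsnd⟩
  · exact Prod.ext hfst hsnd
  · have hdiag : (e k).1 = (e k).2 :=
      (hle k).antisymm (by rw [hfst, hsnd]; exact hle l)
    exact Prod.ext (hdiag.trans hsnd) (hdiag.symm.trans hfst)

section Card

variable {α : Type*} [Fintype α] [LinearOrder α]

theorem card_subtype_prod_le :
    Fintype.card {p : α × α // p.1 ≤ p.2} = (Fintype.card α + 1).choose 2 := by
  rw [← Fintype.card_congr Sym2.sortEquiv, Sym2.card]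

theorem card_subtype_prod_le_and_ne {q : α × α} (hq : q.1 ≤ q.2) :
    Fintype.card {p : α × α // p.1 ≤ p.2 ∧ p ≠ q} = (Fintype.card α + 1).choose 2 - 1 := by
  have herase : (Finset.univ.filter fun p : α × α => p.1 ≤ p.2 ∧ p ≠ q) =
      (Finset.univ.filter fun p : α × α => p.1 ≤ p.2).erase q := by
    ext p
    simp [and_comm]
  rw [Fintype.card_subtype, herase, Finset.card_erase_of_mem (by simpa using hq),
    ← Fintype.card_subtype, card_subtype_prod_le]

theorem card_sum_subtype_prod_le_and_ne {q : α × α} (hq : q.1 ≤ q.2) :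
    Fintype.card (α ⊕ {p : α × α // p.1 ≤ p.2 ∧ p ≠ q}) =
      Fintype.card α * (Fintype.card α + 3) / 2 - 1 := by
  have hpos : 0 < (Fintype.card α + 1).choose 2 := by
    have : 0 < Fintype.card α := Fintype.card_pos_iff.2 ⟨q.1⟩
    exact Nat.choose_pos (by omega)
  have htotal : Fintype.card α * (Fintype.card α + 3) / 2 =
      Fintype.card α + (Fintype.card α + 1).choose 2 := by
    rw [Nat.choose_two_right, Nat.add_sub_cancel, ← Nat.mul_add_div two_pos]
    ring_nf
  rw [Fintype.card_sum, card_subtype_prod_le_and_ne hq, htotal]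
  omega

end Card

/-- The map `x ↦ ((x_i)_i, (x_a x_b)_k)` with `(a, b) = e k`: the coordinates of the canonical free
map that remain when only the quadratic monomials listed by the family `e` are retained. -/
def quadraticMonomialMap {ι κ : Type*} (e : κ → ι × ι) (x : EuclideanSpace ℝ ι) :
    EuclideanSpace ℝ (ι ⊕ κ) :=
  WithLp.toLp 2 (Sum.elim (fun i => x i) fun k => x (e k).1 * x (e k).2)

namespace quadraticMonomialMap

section Derivatives

variable {ι κ : Type*} [Finite ι] [Finite κ] (e : κ → ι × ι) (x v w : EuclideanSpace ℝ ι)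

theorem differentiable : Differentiable ℝ (quadraticMonomialMap e) := by
  have := Fintype.ofFinite ι
  have := Fintype.ofFinite κ
  rw [differentiable_euclidean]
  rintro (i | k) <;> simp only [quadraticMonomialMap, Sum.elim_inl, Sum.elim_inr] <;> fun_prop

theorem fderiv_apply :
    fderiv ℝ (quadraticMonomialMap e) x v =
      WithLp.toLp 2 (Sum.elim (fun i => v i) fun k =>
        x (e k).1 * v (e k).2 + x (e k).2 * v (e k).1) := by
  have := Fintype.ofFinite ι
  have hcoord (i : ι) : HasFDerivAt (fun y : EuclideanSpace ℝ ι => y i)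
      (PiLp.proj 2 (𝕜 := ℝ) (fun _ => ℝ) i) x := PiLp.hasFDerivAt_apply 2 x i
  ext (i | k) <;> rw [fderiv_piLp_apply (differentiable e x)]
  · simp [quadraticMonomialMap, (hcoord i).fderiv]
  · simp [quadraticMonomialMap, ((hcoord (e k).1).fun_mul (hcoord (e k).2)).fderiv]

theorem fderiv_injective : Function.Injective (fderiv ℝ (quadraticMonomialMap e) x) := by
  intro v w hvw
  ext i
  simpa [fderiv_apply] using congr($hvw (Sum.inl i))

theorem differentiable_fderiv_apply :
    Differentiable ℝ fun y => fderiv ℝ (quadraticMonomialMap e) y v := by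
  have := Fintype.ofFinite ι
  have := Fintype.ofFinite κ
  rw [differentiable_euclidean]
  rintro (i | k) <;> simp only [fderiv_apply, Sum.elim_inl, Sum.elim_inr] <;> fun_prop

theorem fderiv_fderiv_apply :
    fderiv ℝ (fun y => fderiv ℝ (quadraticMonomialMap e) y v) x w =
      WithLp.toLp 2 (Sum.elim (fun _ => 0) fun k =>
        w (e k).1 * v (e k).2 + w (e k).2 * v (e k).1) := by
  have := Fintype.ofFinite ι
  have hcoord (i : ι) (c : ℝ) : HasFDerivAt (fun y : EuclideanSpace ℝ ι => y i * c)
      (c • PiLp.proj 2 (𝕜 := ℝ) (fun _ => ℝ) i) x := (PiLp.hasFDerivAt_apply 2 x i).mul_const c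
  ext (i | k) <;> rw [fderiv_piLp_apply (differentiable_fderiv_apply e v x)]
  · simp [fderiv_apply]
  · simp only [fderiv_apply, Sum.elim_inr, ((hcoord (e k).1 _).fun_add (hcoord (e k).2 _)).fderiv]
    simp [mul_comm]

end Derivatives

section PartialDerivatives

variable {m : ℕ} {κ : Type*} [Fintype κ] {e : κ → Fin m × Fin m}

theorem pd_pd_eq (α β : Fin m) (x : EuclideanSpace ℝ (Fin m)) :
    pd α (pd β (quadraticMonomialMap e)) x = WithLp.toLp 2 (Sum.elim (fun _ => 0) fun k =>
      if s((e k).1, (e k).2) = s(α, β) then if α = β then 2 else 1 else 0) := by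
  refine (fderiv_fderiv_apply e x _ _).trans ?_
  congr 2 with k
  simp only [PiLp.single_apply, Sym2.eq_iff]
  grind

theorem pd_pd_eq_zero {α β : Fin m} (hαβ : ∀ k, s((e k).1, (e k).2) ≠ s(α, β)) :
    pd α (pd β (quadraticMonomialMap e)) = 0 := by
  ext x (i | k)
  · simp [pd_pd_eq]
  · simp only [pd_pd_eq, Sum.elim_inr, if_neg (hαβ k), Pi.zero_apply, PiLp.zero_apply]

theorem pd_pd_eq_single [DecidableEq κ] (he : Function.Injective fun k => s((e k).1, (e k).2))
    (k : κ) (x : EuclideanSpace ℝ (Fin m)) :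
    pd (e k).1 (pd (e k).2 (quadraticMonomialMap e)) x =
      EuclideanSpace.single (Sum.inr k) (if (e k).1 = (e k).2 then 2 else 1) := by
  have hpair (l : κ) : s((e l).1, (e l).2) = s((e k).1, (e k).2) ↔ l = k := he.eq_iff
  ext (i | l)
  · simp [pd_pd_eq]
  · simp only [pd_pd_eq, hpair, Sum.elim_inr, PiLp.single_apply, Sum.inr.injEq]

theorem linearIndependent_pd (he : Function.Injective fun k => s((e k).1, (e k).2))
    (x : EuclideanSpace ℝ (Fin m)) :
    LinearIndependent ℝ (Sum.elim (fun α => pd α (quadraticMonomialMap e) x)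
      fun k => pd (e k).1 (pd (e k).2 (quadraticMonomialMap e)) x) := by
  classical
  let coords := (WithLp.linearEquiv 2 ℝ (Fin m ⊕ κ → ℝ)).toLinearMap
  let linearPart := LinearMap.funLeft ℝ ℝ Sum.inl ∘ₗ coords
  let quadraticPart := LinearMap.funLeft ℝ ℝ Sum.inr ∘ₗ coords
  have hfirst : linearPart ∘ (fun α => pd α (quadraticMonomialMap e) x) =
      fun α => Pi.single α 1 := by
    ext α i
    simp [linearPart, coords, pd, fderiv_apply, LinearMap.funLeft_apply, Pi.single_apply]
  have hsecond : quadraticPart ∘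
      (fun k => pd (e k).1 (pd (e k).2 (quadraticMonomialMap e)) x) =
      fun k => Pi.single k (if (e k).1 = (e k).2 then 2 else 1) := by
    ext k l
    simp [quadraticPart, coords, pd_pd_eq_single he, LinearMap.funLeft_apply, Pi.single_apply]
  refine linearIndependent_sumElim_of_map linearPart ?_ (.of_comp quadraticPart ?_) ?_
  · rw [hfirst]
    exact Pi.linearIndependent_single_one (Fin m) ℝ
  · rw [hsecond]
    exact Pi.linearIndependent_single_of_ne_zero fun k => by split_ifs <;> norm_num
  · intro k
    ext i
    simp [linearPart, coords, pd_pd_eq_single he, LinearMap.funLeft_apply]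

theorem span_pd_eq_top (he : Function.Injective fun k => s((e k).1, (e k).2))
    (x : EuclideanSpace ℝ (Fin m)) :
    Submodule.span ℝ (Set.range (Sum.elim (fun α => pd α (quadraticMonomialMap e) x)
      fun k => pd (e k).1 (pd (e k).2 (quadraticMonomialMap e)) x)) = ⊤ :=
  (linearIndependent_pd he x).span_eq_top_of_card_eq_finrank' finrank_euclideanSpace.symm

end PartialDerivatives

end quadraticMonomialMap

/-- For `m ≥ 2`, the composition `F_π` of the canonical free map with the projection
forgetting the coordinate of the monomial `x^1 x^2` (its coordinates are indexed by
`Fin m ⊕ {(α,β) | α ≤ β, (α,β) ≠ (1,2)}`, of cardinality `m(m+3)/2 − 1`) satisfies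
`∂_{12} F_π ≡ 0`, while the remaining first and second partial derivatives are linearly
independent at every point; in particular they span the target and `F_π` is an immersion. -/
theorem projected_canonical_map (m : ℕ) (hm : 2 ≤ m)
    (Fπ : EuclideanSpace ℝ (Fin m) →
        EuclideanSpace ℝ
          (Fin m ⊕ {p : Fin m × Fin m // p.1 ≤ p.2 ∧ ((p.1 : ℕ), (p.2 : ℕ)) ≠ (0, 1)}))
    (hFπ : Fπ = fun x => (WithLp.equiv 2 _).symm
        (Sum.elim (fun α : Fin m => x α)
          (fun p : {p : Fin m × Fin m // p.1 ≤ p.2 ∧ ((p.1 : ℕ), (p.2 : ℕ)) ≠ (0, 1)} =>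
            x p.1.1 * x p.1.2))) :
    Fintype.card
        (Fin m ⊕ {p : Fin m × Fin m // p.1 ≤ p.2 ∧ ((p.1 : ℕ), (p.2 : ℕ)) ≠ (0, 1)})
      = m * (m + 3) / 2 - 1
    ∧ pd (⟨0, by omega⟩ : Fin m) (pd (⟨1, by omega⟩ : Fin m) Fπ) = 0
    ∧ ∀ x : EuclideanSpace ℝ (Fin m),
        LinearIndependent ℝ
          (Sum.elim (fun α : Fin m => pd α Fπ x)
            (fun p : {p : Fin m × Fin m // p.1 ≤ p.2 ∧ ((p.1 : ℕ), (p.2 : ℕ)) ≠ (0, 1)} =>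
              pd p.1.1 (pd p.1.2 Fπ) x))
        ∧ Submodule.span ℝ
            (Set.range (Sum.elim (fun α : Fin m => pd α Fπ x)
              (fun p : {p : Fin m × Fin m // p.1 ≤ p.2 ∧ ((p.1 : ℕ), (p.2 : ℕ)) ≠ (0, 1)} =>
                pd p.1.1 (pd p.1.2 Fπ) x))) = ⊤
        ∧ Function.Injective (fderiv ℝ Fπ x) := by
  have hinj : Function.Injective fun p : {p : Fin m × Fin m //
      p.1 ≤ p.2 ∧ ((p.1 : ℕ), (p.2 : ℕ)) ≠ (0, 1)} => s(p.1.1, p.1.2) :=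
    injective_sym2Mk_of_le Subtype.val_injective fun p => p.2.1
  have hpair (p : Fin m × Fin m) :
      ((p.1 : ℕ), (p.2 : ℕ)) ≠ (0, 1) ↔ p ≠ (⟨0, by omega⟩, ⟨1, by omega⟩) := by
    simp [Prod.ext_iff, Fin.ext_iff]
  obtain rfl : Fπ = quadraticMonomialMap Subtype.val := hFπ
  refine ⟨?_, quadraticMonomialMap.pd_pd_eq_zero ?_, fun x =>
    ⟨quadraticMonomialMap.linearIndependent_pd hinj x, quadraticMonomialMap.span_pd_eq_top hinj x,
      quadraticMonomialMap.fderiv_injective _ x⟩⟩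
  · simp only [hpair]
    simpa using card_sum_subtype_prod_le_and_ne (α := Fin m)
      (q := (⟨0, by omega⟩, ⟨1, by omega⟩)) (by simp)
  · rintro ⟨⟨a, b⟩, hab, hne⟩
    grind [Sym2.eq_iff]
end
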